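/- (Wang–Wu, case B = ∞) Let Φ : ℕ → ℝ⁺ be an arbitrary positive function with liminf_{n→∞} (log Φ(n))/n = ∞, and set log b = liminf_{n→∞} (log log Φ(n))/n. Then the Hausdorff dimension of E_1(Φ) = { x ∈ [0,1) : a_n(x) ≥ Φ(n) for infinitely many n ∈ ℕ } equals 1/(1+b). -/

import Mathlib

/-!
Why the theorem holds. The hypothesis `log Φ(n) / n → ∞` forces `b ≥ 1`. Inverse branches of the
Gauss map satisfy `x - y = -x y (T x - T y)`, so fixing the digits `a_1, …, a_n` contracts by a
factor at most `∏ a_k⁻²` (and, for digits in `[A k, 2 A k)`, at least `∏ (2 A k)⁻²`). No continuants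
are needed.

Upper bound. The points with prescribed digits `a_1, …, a_n` and `a_{n+1} ≥ m` form a set of diameter
at most `∏ a_k⁻² / m`. Grouping `a_{n+1}` dyadically, the `s`-cost of all these sets is finite
provided `a_{n+1} ≥ 2^(K(n+1))` with `K` large, `∏ a_k^θ ≤ a_{n+1}^θ'`, `2s + θ > 1` and `θ' < s`
(`dimH_le_of_frequently_large`). If `b = 1`, take `s > 1/2` and `θ = θ' = 0`. If `1 < d < c < b`, then
`log a_n ≥ c^n` infinitely often on `E1 Φ`, so `log a_n / d^n` reaches new records infinitely often;
at a record, `∑_{k<n} log a_k ≤ log a_n / (d-1)` (`frequently_record`). This permits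
`θ' = θ / (d-1)`, and a suitable `θ` exists exactly when `s > 1 / (1+d)`.

Lower bound. For `d > b`, `Φ(n) ≤ exp(d^n)` infinitely often, so `E1 Φ` contains the irrational points
of the Cantor set with `A_n ≤ a_n < 2 A_n`, `A_n = ⌈exp(d^n)⌉`. Reading `a_n - A_n` as mixed radix
digits maps this Cantor set onto `[0,1)`, and the map is Hölder of every exponent `r < 1 / (1+d)`
(`abs_sub_le_cantorPt`, `exists_radix_growth`). Hence its dimension is at least `r`
(`le_dimH_E1`).
-/


open Filter Topology MeasureTheory
open scoped ENNReal NNReal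

/-- The Gauss map `T(x) = 1/x - ⌊1/x⌋` (with `T 0 = 0`). -/
noncomputable def gaussMap (x : ℝ) : ℝ := if x = 0 then 0 else 1 / x - ⌊1 / x⌋

/-- The `n`-th partial quotient `a_n(x) = ⌊1 / T^[n-1] x⌋` of the continued fraction
expansion of `x` (for `n ≥ 1`). -/
noncomputable def cfA (n : ℕ) (x : ℝ) : ℕ := ⌊1 / gaussMap^[n - 1] x⌋₊

/-- The continuant `q_n(a_1, …, a_n)`, defined by `q_{-1} = 0`, `q_0 = 1`,
`q_k = a_k q_{k-1} + q_{k-2}`. -/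
def contQ (l : List ℕ) : ℕ := (l.foldl (fun p a => (p.2, a * p.2 + p.1)) (0, 1)).2

/-- The continuant numerator `p_n(a_1, …, a_n)`, defined by `p_{-1} = 1`, `p_0 = 0`,
`p_k = a_k p_{k-1} + p_{k-2}`. -/
def contP (l : List ℕ) : ℕ := (l.foldl (fun p a => (p.2, a * p.2 + p.1)) (1, 0)).2

/-- `q_n(x) = q_n(a_1(x), …, a_n(x))`. -/
noncomputable def cfQ (x : ℝ) (n : ℕ) : ℕ := contQ (List.ofFn fun i : Fin n => cfA (i + 1) x)

/-- `p_n(x) = p_n(a_1(x), …, a_n(x))`. -/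
noncomputable def cfP (x : ℝ) (n : ℕ) : ℕ := contP (List.ofFn fun i : Fin n => cfA (i + 1) x)

/-- The set `E_1(Φ)` of irrational `x ∈ [0,1)` with `a_n(x) ≥ Φ(n)` for infinitely many `n`. -/
def E1 (Φ : ℕ → ℝ) : Set ℝ :=
  {x | x ∈ Set.Ico (0 : ℝ) 1 ∧ Irrational x ∧ ∃ᶠ n in atTop, Φ n ≤ (cfA n x : ℝ)}


/-! ### Geometry of the Gauss map -/

lemma gaussMap_irrational {x : ℝ} (hx : Irrational x) : Irrational (gaussMap x) := by
  rw [gaussMap, if_neg hx.ne_zero, one_div]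
  exact_mod_cast hx.inv.sub_intCast _

lemma gaussMap_mem {x : ℝ} (hx : Irrational x) : gaussMap x ∈ Set.Ioo (0 : ℝ) 1 := by
  have h := (gaussMap_irrational hx).ne_zero
  have hf : gaussMap x = Int.fract (1 / x) := by
    rw [gaussMap, if_neg hx.ne_zero]; rfl
  rw [hf] at h ⊢
  exact ⟨lt_of_le_of_ne (Int.fract_nonneg _) (Ne.symm h), Int.fract_lt_one _⟩

lemma gaussMap_iterate {x : ℝ} (hx : Irrational x) (h : x ∈ Set.Ioo (0 : ℝ) 1) (n : ℕ) :
    Irrational (gaussMap^[n] x) ∧ gaussMap^[n] x ∈ Set.Ioo (0 : ℝ) 1 := by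
  induction n with
  | zero => exact ⟨hx, h⟩
  | succ n ih =>
    rw [Function.iterate_succ_apply']
    exact ⟨gaussMap_irrational ih.1, gaussMap_mem ih.1⟩

lemma one_le_natFloor_inv {x : ℝ} (h : x ∈ Set.Ioo (0 : ℝ) 1) : 1 ≤ ⌊1 / x⌋₊ := by
  apply Nat.le_floor
  rw [Nat.cast_one, le_div_iff₀ h.1]
  linarith [h.2]

lemma gaussMap_eq_sub_natFloor {x : ℝ} (h : x ∈ Set.Ioo (0 : ℝ) 1) :
    gaussMap x = 1 / x - (⌊1 / x⌋₊ : ℝ) := by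
  rw [gaussMap, if_neg h.1.ne', natCast_floor_eq_intCast_floor (by have := h.1; positivity)]

/-- A branch of the inverse of the Gauss map with first digit `a` contracts by at least `a²`. -/
lemma abs_sub_le_gaussMap {x y : ℝ} (hx : x ∈ Set.Ioo (0 : ℝ) 1) (hy : y ∈ Set.Ioo (0 : ℝ) 1)
    {a : ℕ} (hxa : ⌊1 / x⌋₊ = a) (hya : ⌊1 / y⌋₊ = a) :
    |x - y| ≤ ((a : ℝ) ^ 2)⁻¹ * |gaussMap x - gaussMap y| := by
  have ha : (0 : ℝ) < a := by
    have := one_le_natFloor_inv hx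
    rw [hxa] at this; exact_mod_cast this
  have key : ∀ z ∈ Set.Ioo (0 : ℝ) 1, ⌊1 / z⌋₊ = a → z ≤ (a : ℝ)⁻¹ := by
    intro z hz hza
    have h1 : (a : ℝ) ≤ 1 / z := by
      rw [← hza]; exact Nat.floor_le (by have := hz.1; positivity)
    rw [le_div_iff₀ hz.1] at h1
    rw [← one_div, le_div_iff₀ ha]; linarith
  have e : |x - y| = (x * y) * |gaussMap x - gaussMap y| := by
    have hx0 := hx.1.ne'
    have hy0 := hy.1.ne'
    have e' : x - y = -((x * y) * (gaussMap x - gaussMap y)) := by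
      rw [gaussMap_eq_sub_natFloor hx, gaussMap_eq_sub_natFloor hy, hxa, hya]
      field_simp; ring
    rw [e', abs_neg, abs_mul, abs_of_pos (mul_pos hx.1 hy.1)]
  rw [e]
  have h2 : x * y ≤ ((a : ℝ) ^ 2)⁻¹ := by
    have := mul_le_mul (key x hx hxa) (key y hy hya) hy.1.le (by positivity)
    rwa [← mul_inv, ← sq] at this
  gcongr

lemma abs_sub_le_gaussMap_iterate {x y : ℝ} (hx : Irrational x) (hx' : x ∈ Set.Ioo (0 : ℝ) 1)
    (hy : Irrational y) (hy' : y ∈ Set.Ioo (0 : ℝ) 1) (w : ℕ → ℕ) (n : ℕ)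
    (hxw : ∀ k < n, cfA (k + 1) x = w k) (hyw : ∀ k < n, cfA (k + 1) y = w k) :
    |x - y| ≤ (∏ k ∈ Finset.range n, ((w k : ℝ) ^ 2)⁻¹) *
      |gaussMap^[n] x - gaussMap^[n] y| := by
  induction n with
  | zero => simp
  | succ n ih =>
    refine (ih (fun k hk => hxw k (by omega)) (fun k hk => hyw k (by omega))).trans ?_
    rw [Finset.prod_range_succ, mul_assoc, Function.iterate_succ_apply',
      Function.iterate_succ_apply']
    refine mul_le_mul_of_nonneg_left ?_ (Finset.prod_nonneg fun _ _ => by positivity)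
    exact abs_sub_le_gaussMap (gaussMap_iterate hx hx' n).2 (gaussMap_iterate hy hy' n).2
      (hxw n (by omega)) (hyw n (by omega))

/-- The irrationals of `(0,1)` whose first `n` partial quotients are given by `w` and whose
`(n+1)`-st partial quotient is at least `m`. -/
def cylTail (n : ℕ) (w : Fin n → ℕ) (m : ℝ) : Set ℝ :=
  {x | x ∈ Set.Ioo (0 : ℝ) 1 ∧ Irrational x ∧ (∀ k : Fin n, cfA (k + 1) x = w k) ∧
    m ≤ (cfA (n + 1) x : ℝ)}

lemma one_le_cfA {x : ℝ} (hx : Irrational x) (hx' : x ∈ Set.Ioo (0 : ℝ) 1) (n : ℕ) :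
    1 ≤ cfA n x :=
  one_le_natFloor_inv (gaussMap_iterate hx hx' (n - 1)).2

lemma ediam_cylTail_le (n : ℕ) (w : Fin n → ℕ) {m : ℝ} (hm : 0 < m) :
    Metric.ediam (cylTail n w m) ≤ ENNReal.ofReal ((∏ k, ((w k : ℝ) ^ 2)⁻¹) * m⁻¹) := by
  refine Metric.ediam_le fun x hx y hy => ?_
  obtain ⟨hx1, hx2, hx3, hx4⟩ := hx
  obtain ⟨hy1, hy2, hy3, hy4⟩ := hy
  rw [edist_dist, Real.dist_eq]
  apply ENNReal.ofReal_le_ofReal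
  have h := abs_sub_le_gaussMap_iterate hx2 hx1 hy2 hy1 (fun k => cfA (k + 1) x) n
    (fun _ _ => rfl) (fun k hk => by rw [hy3 ⟨k, hk⟩, hx3 ⟨k, hk⟩])
  have e : (∏ k ∈ Finset.range n, (((fun k => cfA (k + 1) x) k : ℝ) ^ 2)⁻¹)
      = ∏ k, ((w k : ℝ) ^ 2)⁻¹ := by
    rw [Finset.prod_range]
    exact Finset.prod_congr rfl fun k _ => by simp only [hx3 k]
  rw [e] at h
  refine h.trans (mul_le_mul_of_nonneg_left ?_ (Finset.prod_nonneg fun _ _ => by positivity))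
  have key : ∀ z ∈ Set.Ioo (0 : ℝ) 1, m ≤ (⌊1 / z⌋₊ : ℝ) → z ≤ m⁻¹ := by
    intro z hz hza
    have h1 : m ≤ 1 / z := hza.trans (Nat.floor_le (by have := hz.1; positivity))
    rw [le_div_iff₀ hz.1] at h1
    rw [← one_div, le_div_iff₀ hm]; linarith
  have hX := (gaussMap_iterate hx2 hx1 n).2
  have hY := (gaussMap_iterate hy2 hy1 n).2
  have h1 := key _ hX hx4
  have h2 := key _ hY hy4
  rw [abs_le]
  constructor <;> linarith [hX.1, hY.1]

/-! ### The covering argument -/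

lemma tsum_pi_prod (f : ℕ → ℝ≥0∞) (n : ℕ) :
    ∑' w : Fin n → ℕ, ∏ k, f (w k) = (∑' a, f a) ^ n := by
  induction n with
  | zero => simp
  | succ n ih =>
    rw [← (Fin.consEquiv (fun _ : Fin (n + 1) => ℕ)).tsum_eq, ENNReal.tsum_prod', pow_succ', ← ih,
      ← ENNReal.tsum_mul_right]
    congr 1; ext a
    rw [← ENNReal.tsum_mul_left]
    congr 1; ext w
    simp [Fin.prod_univ_succ, Fin.consEquiv]

/-- The exponent `θ` measures how much of the weight of a word is paid for by its last digit:
words are summed with the convergent weight `∏ a_k ^ (-(2s+θ))`, and the missing factor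
`∏ a_k ^ θ` is absorbed by the power `θ'` of the next digit. -/
lemma dimH_le_of_frequently_large (E : Set ℝ) (s : ℝ≥0) (θ θ' : ℝ)
    (hθ : 1 < 2 * (s : ℝ) + θ) (hθ'0 : 0 ≤ θ') (hθ' : θ' < s)
    (hE : ∀ x ∈ E, x ∈ Set.Ioo (0 : ℝ) 1 ∧ Irrational x)
    (h : ∀ K : ℕ, ∀ x ∈ E, ∃ᶠ n in atTop, (2 : ℝ) ^ (K * (n + 1)) ≤ (cfA (n + 1) x : ℝ) ∧
      ∏ k ∈ Finset.range n, (cfA (k + 1) x : ℝ) ^ θ ≤ (cfA (n + 1) x : ℝ) ^ θ') :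
    dimH E ≤ s := by
  set f : ℕ → ℝ≥0∞ := fun a => ENNReal.ofReal ((a : ℝ) ^ (-(2 * (s : ℝ) + θ))) with hf
  set Z : ℝ≥0∞ := ∑' a, f a with hZ
  have hZtop : Z ≠ ⊤ := by
    have hs : Summable fun a : ℕ => (a : ℝ) ^ (-(2 * (s : ℝ) + θ)) := by
      rw [Real.summable_nat_rpow]; linarith
    exact hs.tsum_ofReal_ne_top
  set ρ : ℝ := (2 : ℝ) ^ (-((s : ℝ) - θ')) with hρ
  have hρ0 : 0 < ρ := by positivity
  have hρ1 : ρ < 1 := Real.rpow_lt_one_of_one_lt_of_neg (by norm_num) (by linarith)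
  obtain ⟨K, hK1, hK⟩ : ∃ K : ℕ, 1 ≤ K ∧ Z * ENNReal.ofReal ρ ^ K ≤ 2⁻¹ := by
    have hlim : Tendsto (fun K : ℕ => Z * ENNReal.ofReal ρ ^ K) atTop (𝓝 (Z * 0)) :=
      ENNReal.Tendsto.const_mul
        (ENNReal.tendsto_pow_atTop_nhds_zero_of_lt_one (ENNReal.ofReal_lt_one.2 hρ1)) (Or.inr hZtop)
    rw [mul_zero] at hlim
    have := (hlim.eventually_lt_const (u := (2⁻¹ : ℝ≥0∞)) (by simp)).and
      (eventually_ge_atTop 1)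
    obtain ⟨K, h1, h2⟩ := this.exists
    exact ⟨K, h2, h1.le⟩
  -- The cover at stage `N`: words of length `n ≥ N`, next digit in `[m, 2m)`, `m = 2^(K(n+1)+j)`.
  let ι : Type := (Σ n : ℕ, (Fin n → ℕ)) × ℕ
  let M : ι → ℝ := fun i => (2 : ℝ) ^ (K * (i.1.1 + 1) + i.2)
  let t : ℕ → ι → Set ℝ := fun N i =>
    {x | x ∈ cylTail i.1.1 i.1.2 (M i) ∧ N ≤ i.1.1 ∧
      ∏ k, (i.1.2 k : ℝ) ^ θ ≤ (2 * M i) ^ θ'}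
  have hMpos : ∀ i, 0 < M i := fun i => by positivity
  let g : ι → ℝ≥0∞ := fun i => (∏ k, f (i.1.2 k)) *
    (ENNReal.ofReal ((2 : ℝ) ^ θ') * ENNReal.ofReal ρ ^ (K * (i.1.1 + 1) + i.2))
  have hdiam : ∀ N i, Metric.ediam (t N i) ≤
      ENNReal.ofReal ((∏ k, ((i.1.2 k : ℝ) ^ 2)⁻¹) * (M i)⁻¹) := fun N i =>
    (Metric.ediam_mono fun x hx => hx.1).trans (ediam_cylTail_le _ _ (hMpos i))
  have hpos : ∀ N i, (t N i).Nonempty → ∀ k, 1 ≤ i.1.2 k := by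
    rintro N i ⟨x, hx, -⟩ k
    rw [← hx.2.2.1 k]
    exact one_le_cfA hx.2.1 hx.1 _
  have hcost : ∀ N i, Metric.ediam (t N i) ^ (s : ℝ) ≤ g i := by
    intro N i
    have hs0 : (0 : ℝ) < s := hθ'0.trans_lt hθ'
    rcases (t N i).eq_empty_or_nonempty with he | hne
    · rw [he, Metric.ediam_empty, ENNReal.zero_rpow_of_pos hs0]; exact zero_le
    have hw := hpos N i hne
    have hw0 : ∀ k, (0 : ℝ) < i.1.2 k := fun k => by exact_mod_cast hw k
    obtain ⟨-, -, -, hθi⟩ := hne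
    refine (ENNReal.rpow_le_rpow (hdiam N i) hs0.le).trans ?_
    have hMi := hMpos i
    have hP0 : 0 ≤ ∏ k, ((i.1.2 k : ℝ) ^ 2)⁻¹ := Finset.prod_nonneg fun _ _ => by positivity
    rw [ENNReal.ofReal_rpow_of_nonneg (by positivity) hs0.le]
    have hg : g i = ENNReal.ofReal ((∏ k, (i.1.2 k : ℝ) ^ (-(2 * (s : ℝ) + θ))) *
        ((2 : ℝ) ^ θ' * ρ ^ (K * (i.1.1 + 1) + i.2))) := by
      have hP1 : 0 ≤ ∏ k, (i.1.2 k : ℝ) ^ (-(2 * (s : ℝ) + θ)) :=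
        Finset.prod_nonneg fun _ _ => by positivity
      rw [ENNReal.ofReal_mul hP1, ENNReal.ofReal_mul (by positivity),
        ENNReal.ofReal_pow hρ0.le, ENNReal.ofReal_prod_of_nonneg (fun _ _ => by positivity)]
    rw [hg]
    apply ENNReal.ofReal_le_ofReal
    rw [Real.mul_rpow hP0 (by positivity), ← Real.finsetProd_rpow _ _ (fun _ _ => by positivity)]
    have e1 : ∏ k, (((i.1.2 k : ℝ) ^ 2)⁻¹) ^ (s : ℝ) =
        (∏ k, (i.1.2 k : ℝ) ^ (-(2 * (s : ℝ) + θ))) * ∏ k, (i.1.2 k : ℝ) ^ θ := by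
      rw [← Finset.prod_mul_distrib]
      refine Finset.prod_congr rfl fun k _ => ?_
      have := hw0 k
      rw [← Real.rpow_add this, ← Real.rpow_natCast, ← Real.rpow_neg this.le,
        ← Real.rpow_mul this.le]
      congr 1; push_cast; ring
    have e2 : (2 * M i) ^ θ' * ((M i)⁻¹) ^ (s : ℝ) =
        (2 : ℝ) ^ θ' * ρ ^ (K * (i.1.1 + 1) + i.2) := by
      have : ρ ^ (K * (i.1.1 + 1) + i.2) = (M i) ^ (-((s : ℝ) - θ')) := by
        simp only [hρ, M]
        rw [← Real.rpow_natCast, ← Real.rpow_natCast, ← Real.rpow_mul (by norm_num),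
          ← Real.rpow_mul (by norm_num), mul_comm]
      rw [this, Real.mul_rpow (by norm_num) hMi.le, Real.inv_rpow hMi.le, ← Real.rpow_neg hMi.le,
        mul_assoc, ← Real.rpow_add hMi]
      congr 2; ring
    rw [e1, ← e2, mul_assoc]
    refine mul_le_mul_of_nonneg_left ?_ (Finset.prod_nonneg fun _ _ => by positivity)
    exact mul_le_mul_of_nonneg_right hθi (by positivity)
  have hsum : ∑' i, g i ≠ ⊤ := by
    set c := ENNReal.ofReal ((2 : ℝ) ^ θ') with hc
    set R := ENNReal.ofReal ρ with hR
    have hR1 : R < 1 := ENNReal.ofReal_lt_one.2 hρ1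
    have hG : (1 - R)⁻¹ ≠ ⊤ := ENNReal.inv_ne_top.2 (tsub_pos_of_lt hR1).ne'
    have e : ∑' i, g i = ∑' n : ℕ, (Z * R ^ K) ^ n * (c * R ^ K * (1 - R)⁻¹) := by
      rw [ENNReal.tsum_prod', ENNReal.tsum_sigma']
      congr 1; ext n
      have : ∀ w : Fin n → ℕ, ∑' j : ℕ, g (⟨n, w⟩, j) =
          (∏ k, f (w k)) * (c * R ^ (K * (n + 1)) * (1 - R)⁻¹) := by
        intro w
        have hg : ∀ j : ℕ, g (⟨n, w⟩, j) =
            (∏ k, f (w k)) * (c * R ^ (K * (n + 1))) * R ^ j := by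
          intro j
          change (∏ k, f (w k)) * (c * R ^ (K * (n + 1) + j)) = _
          rw [pow_add]; ring
        simp only [hg]
        rw [ENNReal.tsum_mul_left, ENNReal.tsum_geometric]
        ring
      simp only [this]
      rw [ENNReal.tsum_mul_right, tsum_pi_prod]
      ring
    have hle : ∑' i, g i ≤ ∑' n : ℕ, (2⁻¹ : ℝ≥0∞) ^ n * (c * R ^ K * (1 - R)⁻¹) := by
      rw [e]
      gcongr
    refine ne_top_of_le_ne_top ?_ hle
    rw [ENNReal.tsum_mul_right, ENNReal.tsum_geometric]
    refine ENNReal.mul_ne_top ?_ (ENNReal.mul_ne_top (ENNReal.mul_ne_top ENNReal.ofReal_ne_top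
      (ENNReal.pow_ne_top ENNReal.ofReal_ne_top)) hG)
    simp
  apply dimH_le_of_hausdorffMeasure_ne_top
  refine ne_top_of_le_ne_top hsum ?_
  have hr : Tendsto (fun N : ℕ => (2⁻¹ : ℝ≥0∞) ^ N) atTop (𝓝 0) :=
    ENNReal.tendsto_pow_atTop_nhds_zero_of_lt_one (by simp)
  refine (Measure.hausdorffMeasure_le_liminf_tsum (s : ℝ) E _ hr t ?_ ?_).trans ?_
  · refine Eventually.of_forall fun N i => ?_
    rcases (t N i).eq_empty_or_nonempty with he | hne
    · rw [he, Metric.ediam_empty]; exact zero_le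
    have hw := hpos N i hne
    obtain ⟨-, -, hN, -⟩ := hne
    refine (hdiam N i).trans ?_
    have h2 : (2⁻¹ : ℝ≥0∞) ^ N = ENNReal.ofReal ((2⁻¹ : ℝ) ^ N) := by
      rw [ENNReal.ofReal_pow (by norm_num), ENNReal.ofReal_inv_of_pos (by norm_num)]; simp
    rw [h2]
    apply ENNReal.ofReal_le_ofReal
    have hP : ∏ k, ((i.1.2 k : ℝ) ^ 2)⁻¹ ≤ 1 :=
      Finset.prod_le_one (fun _ _ => by positivity) fun k _ => by
        have : (1 : ℝ) ≤ i.1.2 k := by exact_mod_cast hw k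
        exact inv_le_one_of_one_le₀ (one_le_pow₀ this)
    have hMi : (M i)⁻¹ ≤ (2⁻¹ : ℝ) ^ N := by
      rw [inv_pow]
      have hexp : N ≤ K * (i.1.1 + 1) + i.2 := by nlinarith
      exact inv_anti₀ (by positivity) (pow_le_pow_right₀ (by norm_num) hexp)
    calc _ ≤ 1 * (M i)⁻¹ := by gcongr
      _ ≤ _ := by rwa [one_mul]
  · refine Eventually.of_forall fun N x hx => ?_
    obtain ⟨hx1, hx2⟩ := hE x hx
    obtain ⟨n, hn, hbig, hprod⟩ := frequently_atTop.1 (h K x hx) N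
    set a := cfA (n + 1) x with ha
    -- `j` is chosen so that `2^(K(n+1)+j) ≤ a < 2^(K(n+1)+j+1)`.
    have ha0 : a ≠ 0 := by have := one_le_cfA hx2 hx1 (n + 1); omega
    have hlog : K * (n + 1) ≤ Nat.log 2 a := by
      apply Nat.le_log_of_pow_le (by norm_num)
      exact_mod_cast hbig
    refine Set.mem_iUnion.2 ⟨(⟨n, fun k => cfA (k + 1) x⟩, Nat.log 2 a - K * (n + 1)), ?_⟩
    have hM : M (⟨n, fun k => cfA (k + 1) x⟩, Nat.log 2 a - K * (n + 1)) =
        (2 : ℝ) ^ Nat.log 2 a := by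
      simp only [M]
      congr 1; omega
    refine ⟨⟨hx1, hx2, fun k => rfl, ?_⟩, hn, ?_⟩
    · rw [hM]
      exact_mod_cast Nat.pow_log_le_self 2 ha0
    · rw [hM, ← Finset.prod_range (fun k => (cfA (k + 1) x : ℝ) ^ θ)]
      refine hprod.trans (Real.rpow_le_rpow (by positivity) ?_ hθ'0)
      rw [← pow_succ']
      exact_mod_cast (Nat.lt_pow_succ_log_self (by norm_num) a).le
  · calc _ ≤ liminf (fun _ : ℕ => ∑' i, g i) atTop :=
          liminf_le_liminf (Eventually.of_forall fun N => ENNReal.tsum_le_tsum (hcost N))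
      _ = _ := liminf_const _

/-! ### Continued fractions with prescribed digits -/

/-- The finite continued fraction `[a 0, …, a (N-1)]`. -/
noncomputable def cfApprox : ℕ → (ℕ → ℕ) → ℝ
  | 0, _ => 0
  | N + 1, a => 1 / (a 0 + cfApprox N (fun k => a (k + 1)))

/-- The value of the infinite continued fraction `[a 0, a 1, …]`; used only for digits `≥ 2`, for
which the finite truncations converge geometrically. -/
noncomputable def cfVal (a : ℕ → ℕ) : ℝ := limUnder atTop (fun N => cfApprox N a)

lemma cfApprox_nonneg (N : ℕ) (a : ℕ → ℕ) : 0 ≤ cfApprox N a := by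
  induction N generalizing a with
  | zero => exact le_rfl
  | succ N ih => have := ih (fun k => a (k + 1)); rw [cfApprox]; positivity

lemma abs_one_div_sub_one_div {p q u v : ℝ} (hp : 0 < p + u) (hq : 0 < q + v) :
    |1 / (p + u) - 1 / (q + v)| = |(p - q) + (u - v)| / ((p + u) * (q + v)) := by
  rw [div_sub_div _ _ hp.ne' hq.ne', abs_div, abs_of_pos (mul_pos hp hq), abs_sub_comm]
  congr 2; ring

lemma cfApprox_succ_sub (N : ℕ) (a : ℕ → ℕ) (ha : ∀ k, 2 ≤ a k) :
    |cfApprox N a - cfApprox (N + 1) a| ≤ 1 * (1 / 4 : ℝ) ^ N := by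
  induction N generalizing a with
  | zero =>
    have h : (2 : ℝ) ≤ a 0 := by exact_mod_cast ha 0
    simp only [cfApprox, zero_sub, add_zero, abs_neg, pow_zero, mul_one]
    rw [abs_of_nonneg (by positivity), div_le_one (by linarith)]
    linarith
  | succ N ih =>
    have h : (2 : ℝ) ≤ a 0 := by exact_mod_cast ha 0
    have h1 := ih (fun k => a (k + 1)) (fun k => ha _)
    have n1 := cfApprox_nonneg N (fun k => a (k + 1))
    have n2 := cfApprox_nonneg (N + 1) (fun k => a (k + 1))
    rw [cfApprox, cfApprox, abs_one_div_sub_one_div (by linarith) (by linarith), sub_self, zero_add,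
      div_le_iff₀ (by nlinarith), pow_succ]
    have h4 : 4 ≤ ((a 0 : ℝ) + cfApprox N (fun k => a (k + 1))) *
        (a 0 + cfApprox (N + 1) (fun k => a (k + 1))) := by nlinarith
    have hp : (0 : ℝ) ≤ (1 / 4) ^ N := by positivity
    nlinarith

lemma tendsto_cfVal (a : ℕ → ℕ) (ha : ∀ k, 2 ≤ a k) :
    Tendsto (fun N => cfApprox N a) atTop (𝓝 (cfVal a)) := by
  apply CauchySeq.tendsto_limUnder
  refine cauchySeq_of_le_geometric (1 / 4 : ℝ) 1 (by norm_num) fun N => ?_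
  rw [Real.dist_eq]
  exact cfApprox_succ_sub N a ha

lemma cfVal_nonneg (a : ℕ → ℕ) (ha : ∀ k, 2 ≤ a k) : 0 ≤ cfVal a :=
  ge_of_tendsto' (tendsto_cfVal a ha) fun N => cfApprox_nonneg N a

lemma cfVal_eq (a : ℕ → ℕ) (ha : ∀ k, 2 ≤ a k) :
    cfVal a = 1 / (a 0 + cfVal (fun k => a (k + 1))) := by
  have h1 := (tendsto_add_atTop_iff_nat 1).2 (tendsto_cfVal a ha)
  have h2 := tendsto_cfVal (fun k => a (k + 1)) (fun k => ha _)
  have h0 := cfVal_nonneg (fun k => a (k + 1)) (fun k => ha _)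
  have h : (2 : ℝ) ≤ a 0 := by exact_mod_cast ha 0
  refine tendsto_nhds_unique h1 ?_
  simp only [cfApprox]
  exact tendsto_const_nhds.div (tendsto_const_nhds.add h2) (by linarith)

lemma cfVal_mem (a : ℕ → ℕ) (ha : ∀ k, 2 ≤ a k) : 0 < cfVal a ∧ cfVal a ≤ 1 / 2 := by
  have h0 := cfVal_nonneg (fun k => a (k + 1)) (fun k => ha _)
  have h : (2 : ℝ) ≤ a 0 := by exact_mod_cast ha 0
  rw [cfVal_eq a ha]
  constructor
  · positivity
  · exact one_div_le_one_div_of_le (by norm_num) (by linarith)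

lemma floor_cfVal (a : ℕ → ℕ) (ha : ∀ k, 2 ≤ a k) : ⌊1 / cfVal a⌋₊ = a 0 := by
  have h0 := cfVal_mem (fun k => a (k + 1)) (fun k => ha _)
  rw [cfVal_eq a ha, one_div_one_div, Nat.floor_eq_iff (by have := h0.1; positivity)]
  constructor <;> linarith [h0.1, h0.2]

lemma gaussMap_cfVal (a : ℕ → ℕ) (ha : ∀ k, 2 ≤ a k) :
    gaussMap (cfVal a) = cfVal (fun k => a (k + 1)) := by
  have h := cfVal_mem a ha
  rw [gaussMap_eq_sub_natFloor ⟨h.1, by linarith⟩, floor_cfVal a ha, cfVal_eq a ha, one_div_one_div]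
  ring

lemma gaussMap_iterate_cfVal (a : ℕ → ℕ) (ha : ∀ k, 2 ≤ a k) (n : ℕ) :
    gaussMap^[n] (cfVal a) = cfVal (fun k => a (k + n)) := by
  induction n with
  | zero => rfl
  | succ n ih =>
    rw [Function.iterate_succ_apply', ih, gaussMap_cfVal _ (fun k => ha _)]
    congr 1; ext k; congr 1; ring

lemma cfA_cfVal (a : ℕ → ℕ) (ha : ∀ k, 2 ≤ a k) (n : ℕ) : cfA (n + 1) (cfVal a) = a n := by
  rw [cfA, Nat.add_sub_cancel, gaussMap_iterate_cfVal a ha, floor_cfVal _ (fun k => ha _), zero_add]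

/-- Two continued fractions that first differ at position `n`, all their digits lying in
`[A k, 2 A k)`, are separated by a definite gap. -/
lemma cfVal_sub_lower (A a a' : ℕ → ℕ) (ha : ∀ k, 2 ≤ a k) (ha' : ∀ k, 2 ≤ a' k)
    (hA : ∀ k, a k < 2 * A k) (hA' : ∀ k, a' k < 2 * A k) (n : ℕ) (heq : ∀ k < n, a k = a' k)
    (hne : a n ≠ a' n) :
    (∏ k ∈ Finset.range n, (4 * (A k : ℝ) ^ 2)⁻¹) * (|(a n : ℝ) - a' n| / (8 * (A n : ℝ) ^ 2)) ≤
      |cfVal a - cfVal a'| := by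
  induction n generalizing A a a' with
  | zero =>
    have m1 := cfVal_mem (fun k => a (k + 1)) (fun k => ha _)
    have m2 := cfVal_mem (fun k => a' (k + 1)) (fun k => ha' _)
    have h1 : (2 : ℝ) ≤ a 0 := by exact_mod_cast ha 0
    have h2 : (2 : ℝ) ≤ a' 0 := by exact_mod_cast ha' 0
    have h3 : (a 0 : ℝ) + 1 ≤ 2 * A 0 := by exact_mod_cast hA 0
    have h4 : (a' 0 : ℝ) + 1 ≤ 2 * A 0 := by exact_mod_cast hA' 0
    have hd : (1 : ℝ) ≤ |(a 0 : ℝ) - a' 0| := by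
      have : (1 : ℤ) ≤ |(a 0 : ℤ) - a' 0| :=
        Int.one_le_abs (sub_ne_zero.2 (by exact_mod_cast hne))
      exact_mod_cast this
    rw [Finset.prod_range_zero, one_mul, cfVal_eq a ha, cfVal_eq a' ha',
      abs_one_div_sub_one_div (by linarith) (by linarith)]
    set u := cfVal (fun k => a (k + 1))
    set v := cfVal (fun k => a' (k + 1))
    have hnum : |(a 0 : ℝ) - a' 0| / 2 ≤ |(a 0 : ℝ) - a' 0 + (u - v)| := by
      have h5 : |u - v| ≤ 1 / 2 := by rw [abs_le]; constructor <;> linarith [m1.1, m2.1, m1.2, m2.2]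
      have h6 := abs_sub_abs_le_abs_add ((a 0 : ℝ) - a' 0) (u - v)
      linarith
    have hden : ((a 0 : ℝ) + u) * (a' 0 + v) ≤ 4 * (A 0 : ℝ) ^ 2 := by
      have := mul_le_mul (show (a 0 : ℝ) + u ≤ 2 * A 0 by linarith [m1.2])
        (show (a' 0 : ℝ) + v ≤ 2 * A 0 by linarith [m2.2]) (by linarith) (by linarith)
      nlinarith
    have hpos : 0 < ((a 0 : ℝ) + u) * (a' 0 + v) := mul_pos (by linarith) (by linarith)
    calc |(a 0 : ℝ) - a' 0| / (8 * (A 0 : ℝ) ^ 2)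
        = (|(a 0 : ℝ) - a' 0| / 2) / (4 * (A 0 : ℝ) ^ 2) := by
          rw [div_div]; congr 1; ring
      _ ≤ _ := div_le_div₀ (abs_nonneg _) hnum hpos hden
  | succ n ih =>
    have h := ih (fun k => A (k + 1)) (fun k => a (k + 1)) (fun k => a' (k + 1)) (fun k => ha _)
      (fun k => ha' _) (fun k => hA _) (fun k => hA' _) (fun k hk => heq _ (by omega)) hne
    have m1 := cfVal_mem (fun k => a (k + 1)) (fun k => ha _)
    have m2 := cfVal_mem (fun k => a' (k + 1)) (fun k => ha' _)
    have h1 : (2 : ℝ) ≤ a 0 := by exact_mod_cast ha 0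
    have h3 : (a 0 : ℝ) + 1 ≤ 2 * A 0 := by exact_mod_cast hA 0
    rw [Finset.prod_range_succ', cfVal_eq a ha, cfVal_eq a' ha', ← heq 0 (by omega),
      abs_one_div_sub_one_div (by linarith) (by linarith), sub_self, zero_add]
    set u := cfVal (fun k => a (k + 1))
    set v := cfVal (fun k => a' (k + 1))
    have hden : ((a 0 : ℝ) + u) * (a 0 + v) ≤ 4 * (A 0 : ℝ) ^ 2 := by
      have := mul_le_mul (show (a 0 : ℝ) + u ≤ 2 * A 0 by linarith [m1.2])
        (show (a 0 : ℝ) + v ≤ 2 * A 0 by linarith [m2.2]) (by linarith) (by linarith)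
      nlinarith
    have hpos : 0 < ((a 0 : ℝ) + u) * (a 0 + v) := mul_pos (by linarith) (by linarith)
    rw [mul_right_comm, ← div_eq_mul_inv]
    exact div_le_div₀ (abs_nonneg _) h hpos hden

/-! ### Mixed radix expansions and the lower bound -/

/-- Remainders of the expansion of `y ∈ [0,1)` in the mixed radix `A 0, A 1, …`. -/
noncomputable def radixRem (A : ℕ → ℕ) (y : ℝ) : ℕ → ℝ
  | 0 => y
  | n + 1 => Int.fract (A n * radixRem A y n)

/-- Digits of the expansion of `y ∈ [0,1)` in the mixed radix `A 0, A 1, …`. -/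
noncomputable def radixDigit (A : ℕ → ℕ) (y : ℝ) (n : ℕ) : ℕ := ⌊A n * radixRem A y n⌋₊

lemma radixRem_mem (A : ℕ → ℕ) {y : ℝ} (hy : y ∈ Set.Ico (0 : ℝ) 1) (n : ℕ) :
    radixRem A y n ∈ Set.Ico (0 : ℝ) 1 := by
  cases n with
  | zero => exact hy
  | succ n => exact ⟨Int.fract_nonneg _, Int.fract_lt_one _⟩

lemma radixDigit_lt (A : ℕ → ℕ) (hA : ∀ k, 2 ≤ A k) {y : ℝ} (hy : y ∈ Set.Ico (0 : ℝ) 1) (n : ℕ) :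
    radixDigit A y n < A n := by
  have h := radixRem_mem A hy n
  have hAn : (2 : ℝ) ≤ A n := by exact_mod_cast hA n
  rw [radixDigit, Nat.floor_lt (mul_nonneg (by linarith) h.1)]
  nlinarith [h.2]

lemma radixRem_mul (A : ℕ → ℕ) {y : ℝ} (hy : y ∈ Set.Ico (0 : ℝ) 1) (n : ℕ) :
    A n * radixRem A y n = radixDigit A y n + radixRem A y (n + 1) := by
  have h := radixRem_mem A hy n
  rw [radixDigit, natCast_floor_eq_intCast_floor (mul_nonneg (by positivity) h.1), radixRem,
    Int.floor_add_fract]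

lemma radixRem_sub (A : ℕ → ℕ) {y y' : ℝ} (hy : y ∈ Set.Ico (0 : ℝ) 1)
    (hy' : y' ∈ Set.Ico (0 : ℝ) 1) (n : ℕ)
    (heq : ∀ k < n, radixDigit A y k = radixDigit A y' k) :
    (∏ k ∈ Finset.range n, (A k : ℝ)) * (y - y') = radixRem A y n - radixRem A y' n := by
  induction n with
  | zero => simp [radixRem]
  | succ n ih =>
    have h1 := radixRem_mul A hy n
    have h2 := radixRem_mul A hy' n
    rw [heq n (by omega)] at h1
    rw [Finset.prod_range_succ, mul_right_comm, ih fun k hk => heq k (by omega)]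
    linarith

lemma exists_radixDigit_ne (A : ℕ → ℕ) (hA : ∀ k, 2 ≤ A k) {y y' : ℝ}
    (hy : y ∈ Set.Ico (0 : ℝ) 1) (hy' : y' ∈ Set.Ico (0 : ℝ) 1) (hne : y ≠ y') :
    ∃ n, radixDigit A y n ≠ radixDigit A y' n := by
  by_contra! hall
  have hpos : 0 < |y - y'| := abs_pos.2 (sub_ne_zero.2 hne)
  obtain ⟨n, hn⟩ := pow_unbounded_of_one_lt (1 / |y - y'|) (one_lt_two (α := ℝ))
  have h := radixRem_sub A hy hy' n fun k _ => hall k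
  have m1 := radixRem_mem A hy n
  have m2 := radixRem_mem A hy' n
  have hP : (2 : ℝ) ^ n ≤ ∏ k ∈ Finset.range n, (A k : ℝ) := by
    have := Finset.prod_le_prod (s := Finset.range n) (f := fun _ => (2 : ℝ))
      (g := fun k => (A k : ℝ)) (fun _ _ => by norm_num) (fun k _ => by exact_mod_cast hA k)
    simpa using this
  have h1 : (∏ k ∈ Finset.range n, (A k : ℝ)) * |y - y'| ≤ 1 := by
    rw [← abs_of_nonneg (Finset.prod_nonneg fun k _ => Nat.cast_nonneg (A k) :
      (0 : ℝ) ≤ ∏ k ∈ Finset.range n, (A k : ℝ)), ← abs_mul, h, abs_le]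
    constructor <;> linarith [m1.1, m1.2, m2.1, m2.2]
  rw [div_lt_iff₀ hpos] at hn
  nlinarith

/-- The point of the Cantor set coded by `y`: its `(n+1)`-st partial quotient is `A n` plus the
`n`-th mixed radix digit of `y`. -/
noncomputable def cantorPt (A : ℕ → ℕ) (y : ℝ) : ℝ := cfVal fun n => A n + radixDigit A y n

/-- The inverse of `cantorPt A` is Hölder with exponent `r`, as soon as the single radix `A n` is
controlled by the product of the previous ones. -/
lemma abs_sub_le_cantorPt (A : ℕ → ℕ) (hA : ∀ k, 2 ≤ A k) {r C : ℝ} (hr : 0 < r) (hr1 : r ≤ 1)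
    (hC0 : 0 ≤ C)
    (hC : ∀ n, (16 * 4 ^ n * (A n : ℝ)) ^ r ≤
      C * (∏ k ∈ Finset.range n, (A k : ℝ)) ^ (1 - 2 * r))
    {y y' : ℝ} (hy : y ∈ Set.Ico (0 : ℝ) 1) (hy' : y' ∈ Set.Ico (0 : ℝ) 1) :
    |y - y'| ≤ C * |cantorPt A y - cantorPt A y'| ^ r := by
  classical
  rcases eq_or_ne y y' with rfl | hne
  · rw [sub_self, abs_zero]; positivity
  have hex := exists_radixDigit_ne A hA hy hy' hne
  set n := Nat.find hex with hn
  have hdn : radixDigit A y n ≠ radixDigit A y' n := Nat.find_spec hex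
  have heq : ∀ k < n, radixDigit A y k = radixDigit A y' k := fun k hk => by
    simpa using Nat.find_min hex hk
  have hlow := cfVal_sub_lower A (fun n => A n + radixDigit A y n)
    (fun n => A n + radixDigit A y' n) (fun k => by have := hA k; omega)
    (fun k => by have := hA k; omega)
    (fun k => by have := radixDigit_lt A hA hy k; omega)
    (fun k => by have := radixDigit_lt A hA hy' k; omega) n
    (fun k hk => by simp only [heq k hk]) (by simpa using hdn)
  have hd : (1 : ℝ) ≤ |(radixDigit A y n : ℝ) - radixDigit A y' n| := by
    have : (1 : ℤ) ≤ |(radixDigit A y n : ℤ) - radixDigit A y' n| :=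
      Int.one_le_abs (sub_ne_zero.2 (by exact_mod_cast hdn))
    exact_mod_cast this
  have hΔ : ((A n + radixDigit A y n : ℕ) : ℝ) - ((A n + radixDigit A y' n : ℕ) : ℝ) =
      (radixDigit A y n : ℝ) - radixDigit A y' n := by push_cast; ring
  simp only [hΔ] at hlow
  set Δ := |(radixDigit A y n : ℝ) - radixDigit A y' n| with hΔdef
  set P := ∏ k ∈ Finset.range n, (A k : ℝ) with hP
  have hP0 : 0 < P := Finset.prod_pos fun k _ => by have := hA k; positivity
  have hAn : (0 : ℝ) < A n := by have := hA n; positivity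
  have hprod : ∏ k ∈ Finset.range n, (4 * (A k : ℝ) ^ 2)⁻¹ = (4 ^ n * P ^ 2)⁻¹ := by
    rw [Finset.prod_inv_distrib, Finset.prod_mul_distrib, Finset.prod_pow, Finset.prod_const,
      Finset.card_range]
  rw [hprod] at hlow
  have hsub := radixRem_sub A hy hy' n heq
  have m1 := radixRem_mem A hy n
  have m2 := radixRem_mem A hy' n
  have m3 := radixRem_mem A hy (n + 1)
  have m4 := radixRem_mem A hy' (n + 1)
  set u := |radixRem A y n - radixRem A y' n| with hu
  have hu1 : u ≤ 1 := by rw [hu, abs_le]; constructor <;> linarith [m1.1, m1.2, m2.1, m2.2]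
  have hu2 : u ≤ 2 * Δ / A n := by
    have hAu : u * A n = |A n * (radixRem A y n - radixRem A y' n)| := by
      rw [abs_mul, abs_of_pos hAn, mul_comm]
    rw [le_div_iff₀ hAn, hAu, mul_sub, radixRem_mul A hy, radixRem_mul A hy']
    have h5 : |radixRem A y (n + 1) - radixRem A y' (n + 1)| ≤ 1 := by
      rw [abs_le]; constructor <;> linarith [m3.1, m3.2, m4.1, m4.2]
    calc _ = |((radixDigit A y n : ℝ) - radixDigit A y' n) +
          (radixRem A y (n + 1) - radixRem A y' (n + 1))| := by congr 1; ring
      _ ≤ Δ + 1 := (abs_add_le _ _).trans (by linarith)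
      _ ≤ 2 * Δ := by linarith
  have hu3 : u ≤ (2 * Δ / A n) ^ r := by
    have hu0 : 0 ≤ u := abs_nonneg _
    refine le_trans ?_ (Real.rpow_le_rpow hu0 hu2 hr.le)
    rcases hu0.eq_or_lt with h0 | h0
    · rw [← h0]; positivity
    · simpa using Real.rpow_le_rpow_of_exponent_ge h0 hu1 hr1
  have hyu : |y - y'| = u / P := by
    rw [eq_div_iff hP0.ne', mul_comm, hu, ← hsub, abs_mul, abs_of_pos hP0]
  rw [hyu, div_le_iff₀ hP0]
  set L := (4 ^ n * P ^ 2)⁻¹ * (Δ / (8 * (A n : ℝ) ^ 2)) with hL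
  have hΔ0 : 0 < Δ := by linarith
  have hL0 : 0 ≤ L := by positivity
  have e : 2 * Δ / A n = L * ((16 * 4 ^ n * (A n : ℝ)) * P ^ 2) := by
    rw [hL]; field_simp; norm_num
  have e2 : P ^ (1 - 2 * r) * (P ^ 2) ^ r = P := by
    rw [← Real.rpow_natCast, ← Real.rpow_mul hP0.le, ← Real.rpow_add hP0]
    norm_num
  calc u ≤ (2 * Δ / A n) ^ r := hu3
    _ = L ^ r * ((16 * 4 ^ n * (A n : ℝ)) ^ r * (P ^ 2) ^ r) := by
      rw [e, Real.mul_rpow hL0 (by positivity),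
        Real.mul_rpow (x := 16 * 4 ^ n * (A n : ℝ)) (by positivity) (by positivity)]
    _ ≤ L ^ r * ((C * P ^ (1 - 2 * r)) * (P ^ 2) ^ r) := by
      have := hC n
      gcongr
    _ = C * L ^ r * P := by rw [mul_assoc C, e2]; ring
    _ ≤ C * |cantorPt A y - cantorPt A y'| ^ r * P := by
      gcongr
      exact hlow

lemma exists_linear_le_pow {c δ d : ℝ} (hc : 0 ≤ c) (hδ : 0 < δ) (hd : 1 < d) :
    ∃ B : ℝ, ∀ n : ℕ, c * n ≤ δ * d ^ n + B := by
  have h := (tendsto_pow_const_div_const_pow_of_one_lt 1 hd).const_mul c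
  rw [mul_zero] at h
  obtain ⟨N, hN⟩ := eventually_atTop.1 (h.eventually_lt_const hδ)
  refine ⟨c * N, fun n => ?_⟩
  have hdn : 0 < d ^ n := by positivity
  rcases le_total N n with hn | hn
  · have := hN n hn
    rw [pow_one, ← mul_div_assoc, div_lt_iff₀ hdn] at this
    nlinarith [mul_nonneg hc (Nat.cast_nonneg (α := ℝ) N)]
  · have : (n : ℝ) ≤ N := by exact_mod_cast hn
    nlinarith [mul_le_mul_of_nonneg_left this hc]

/-- The radices `A n ≈ exp (d ^ (n+1))` satisfy the growth condition of `abs_sub_le_cantorPt` for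
every exponent `r < 1 / (1 + d)`. -/
lemma exists_radix_growth {d r : ℝ} (hd : 1 < d) (hr : 0 < r) (hrd : r * (1 + d) < 1) :
    ∃ C : ℝ, 0 ≤ C ∧ ∀ n : ℕ, (16 * 4 ^ n * (⌈Real.exp (d ^ (n + 1))⌉₊ : ℝ)) ^ r ≤
      C * (∏ k ∈ Finset.range n, (⌈Real.exp (d ^ (k + 1))⌉₊ : ℝ)) ^ (1 - 2 * r) := by
  have hd1 : 0 < d - 1 := by linarith
  set δ := (1 - 2 * r) / (d - 1) - r with hδdef
  have hδ : 0 < δ := by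
    rw [hδdef, sub_pos, lt_div_iff₀ hd1]; nlinarith
  have h2r : 0 < 1 - 2 * r := by nlinarith
  obtain ⟨B, hB⟩ := exists_linear_le_pow (c := r * Real.log 4) (δ := δ * d) (d := d)
    (by have := Real.log_nonneg (x := 4) (by norm_num); positivity) (by positivity) hd
  refine ⟨Real.exp (r * Real.log 32 + B + (1 - 2 * r) * d / (d - 1)), (Real.exp_pos _).le,
    fun n => ?_⟩
  have hup : (⌈Real.exp (d ^ (n + 1))⌉₊ : ℝ) ≤ 2 * Real.exp (d ^ (n + 1)) := by
    have h1 := (Nat.ceil_lt_add_one (Real.exp_pos (d ^ (n + 1))).le).le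
    have h2 : 1 ≤ Real.exp (d ^ (n + 1)) := Real.one_le_exp (by positivity)
    linarith
  have hlow : Real.exp (∑ k ∈ Finset.range n, d ^ (k + 1)) ≤
      ∏ k ∈ Finset.range n, (⌈Real.exp (d ^ (k + 1))⌉₊ : ℝ) := by
    rw [Real.exp_sum]
    exact Finset.prod_le_prod (fun _ _ => (Real.exp_pos _).le) fun _ _ => Nat.le_ceil _
  have hgeom : ∑ k ∈ Finset.range n, d ^ (k + 1) = (d ^ (n + 1) - d) / (d - 1) := by
    simp only [pow_succ]
    rw [← Finset.sum_mul, geom_sum_eq hd.ne']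
    field_simp
  have e1 : 16 * 4 ^ n * (2 * Real.exp (d ^ (n + 1))) =
      Real.exp (Real.log 32 + n * Real.log 4 + d ^ (n + 1)) := by
    rw [Real.exp_add, Real.exp_add, Real.exp_log (by norm_num), mul_comm (n : ℝ), Real.exp_mul,
      Real.exp_log (by norm_num), Real.rpow_natCast]
    ring
  calc (16 * 4 ^ n * (⌈Real.exp (d ^ (n + 1))⌉₊ : ℝ)) ^ r
      ≤ (16 * 4 ^ n * (2 * Real.exp (d ^ (n + 1)))) ^ r := by gcongr
    _ = Real.exp (r * Real.log 32 + r * Real.log 4 * n + r * d ^ (n + 1)) := by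
      rw [e1, ← Real.exp_mul]; congr 1; ring
    _ ≤ Real.exp (r * Real.log 32 + B + (1 - 2 * r) * d / (d - 1) +
          (d ^ (n + 1) - d) / (d - 1) * (1 - 2 * r)) := by
      apply Real.exp_le_exp.2
      have h := hB n
      have e3 : r * Real.log 32 + B + (1 - 2 * r) * d / (d - 1) +
          (d ^ (n + 1) - d) / (d - 1) * (1 - 2 * r) =
          r * Real.log 32 + B + (δ * d * d ^ n + r * d ^ (n + 1)) := by
        rw [hδdef, pow_succ]; field_simp; ring
      rw [e3]; linarith
    _ = Real.exp (r * Real.log 32 + B + (1 - 2 * r) * d / (d - 1)) *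
          (Real.exp (∑ k ∈ Finset.range n, d ^ (k + 1))) ^ (1 - 2 * r) := by
      rw [hgeom, ← Real.exp_mul, ← Real.exp_add]
    _ ≤ _ := by gcongr

lemma le_dimH_E1 (Φ : ℕ → ℝ) {d : ℝ} (hd : 1 < d)
    (hΦ : ∃ᶠ n in atTop, Φ n ≤ Real.exp (d ^ n)) (r : ℝ≥0) (hr : 0 < r)
    (hrd : (r : ℝ) * (1 + d) < 1) : (r : ℝ≥0∞) ≤ dimH (E1 Φ) := by
  set A : ℕ → ℕ := fun n => ⌈Real.exp (d ^ (n + 1))⌉₊ with hAdef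
  have hA : ∀ k, 2 ≤ A k := by
    intro k
    have h1 : (1 : ℝ) < ⌈Real.exp (d ^ (k + 1))⌉₊ :=
      (Real.one_lt_exp_iff.2 (by positivity)).trans_le (Nat.le_ceil _)
    exact_mod_cast h1
  have hr' : (0 : ℝ) < r := by exact_mod_cast hr
  obtain ⟨C, hC0, hC⟩ := exists_radix_growth hd hr' hrd
  have hhol := fun {y y' : ℝ} => abs_sub_le_cantorPt A hA hr' (by nlinarith) hC0 hC (y := y)
    (y' := y')
  set I := Set.Ico (0 : ℝ) 1 with hI
  set F := cantorPt A '' I with hF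
  have hinj : Set.InjOn (cantorPt A) I := by
    intro y hy y' hy' h
    have := hhol hy hy'
    rw [h, sub_self, abs_zero, Real.zero_rpow hr'.ne', mul_zero] at this
    exact sub_eq_zero.1 (abs_eq_zero.1 (le_antisymm this (abs_nonneg _)))
  have hleft := hinj.leftInvOn_invFunOn
  have hH : HolderOnWith C.toNNReal r (Function.invFunOn (cantorPt A) I) F := by
    rintro _ ⟨y, hy, rfl⟩ _ ⟨y', hy', rfl⟩
    rw [hleft hy, hleft hy', edist_dist, edist_dist, Real.dist_eq, Real.dist_eq,
      ENNReal.ofReal_rpow_of_nonneg (abs_nonneg _) hr'.le]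
    change _ ≤ ENNReal.ofReal C * _
    rw [← ENNReal.ofReal_mul hC0]
    exact ENNReal.ofReal_le_ofReal (hhol hy hy')
  have hdimF : (r : ℝ≥0∞) ≤ dimH F := by
    have h1 := hH.dimH_image_le hr
    rw [hF, hleft.image_image, Real.dimH_of_nonempty_interior (by
      rw [hI, interior_Ico]; exact ⟨1 / 2, by norm_num⟩)] at h1
    rw [ENNReal.le_div_iff_mul_le (Or.inl (by exact_mod_cast hr.ne')) (Or.inl ENNReal.coe_ne_top)]
      at h1
    simpa using h1
  -- The rational points of the Cantor set are discarded by countability.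
  have hsub : F ⊆ E1 Φ ∪ Set.range ((↑) : ℚ → ℝ) := by
    rintro _ ⟨y, hy, rfl⟩
    have ha : ∀ k, 2 ≤ A k + radixDigit A y k := fun k => by have := hA k; omega
    by_cases hirr : Irrational (cantorPt A y)
    · left
      have hm := cfVal_mem _ ha
      refine ⟨⟨hm.1.le, by rw [cantorPt]; linarith [hm.2]⟩, hirr, ?_⟩
      refine (hΦ.and_eventually (eventually_ge_atTop 1)).mono ?_
      rintro n ⟨h1, h2⟩
      obtain ⟨m, rfl⟩ := Nat.exists_eq_add_of_le' h2
      rw [cantorPt, cfA_cfVal _ ha]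
      refine h1.trans ((Nat.le_ceil _).trans ?_)
      exact_mod_cast Nat.le_add_right _ _
    · right
      rw [Irrational, not_not] at hirr
      exact hirr
  have h2 := dimH_mono hsub
  rw [dimH_union, dimH_countable (Set.countable_range _), max_eq_left zero_le] at h2
  exact hdimF.trans h2

/-! ### The upper bound for superexponential growth -/

/-- If `l n ≥ c ^ n` infinitely often and `d < c`, then `l n / d ^ n` is unbounded, so it attains
new records infinitely often; at a record, `l n` dominates the sum of all previous terms. -/
lemma frequently_record (l : ℕ → ℝ) (hl : ∀ k, 0 ≤ l k) {c d : ℝ} (hd : 1 < d) (hdc : d < c)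
    (h : ∃ᶠ n in atTop, c ^ n ≤ l n) (Q : ℝ) (hQ : 0 ≤ Q) :
    ∃ᶠ n : ℕ in atTop, Q * (n + 1) ≤ l n ∧ (d - 1) * ∑ k ∈ Finset.range n, l k ≤ l n := by
  classical
  have hd0 : 0 < d := by linarith
  obtain ⟨B, hB⟩ := exists_linear_le_pow hQ one_pos hd
  refine frequently_atTop.2 fun N => ?_
  set u : ℕ → ℝ := fun n => l n / d ^ n with hu
  have hu0 : ∀ n, 0 ≤ u n := fun n => div_nonneg (hl n) (by positivity)
  have hlu : ∀ n, l n = u n * d ^ n := fun n => by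
    rw [hu]; field_simp
  set M := 1 + |B| + Q + ∑ k ∈ Finset.range N, u k with hM
  have hex : ∃ n, M < u n := by
    have ht : Tendsto (fun n : ℕ => (c / d) ^ n) atTop atTop :=
      tendsto_pow_atTop_atTop_of_one_lt ((one_lt_div hd0).2 hdc)
    obtain ⟨n, h1, h2⟩ := (h.and_eventually (ht.eventually_gt_atTop M)).exists
    refine ⟨n, h2.trans_le ?_⟩
    rw [div_pow]
    exact div_le_div_of_nonneg_right h1 (by positivity)
  set n := Nat.find hex with hn
  have hMn : M < u n := Nat.find_spec hex
  have hmin : ∀ k < n, u k ≤ u n := fun k hk => (not_lt.1 (Nat.find_min hex hk)).trans hMn.le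
  have hS0 : 0 ≤ ∑ k ∈ Finset.range N, u k := Finset.sum_nonneg fun k _ => hu0 k
  have hdn : 1 ≤ d ^ n := one_le_pow₀ hd.le
  refine ⟨n, ?_, ?_, ?_⟩
  · by_contra hlt
    have := Finset.single_le_sum (f := u) (fun k _ => hu0 k) (Finset.mem_range.2 (not_le.1 hlt))
    linarith [abs_nonneg B]
  · rw [hlu]
    have h1 := hB n
    have h2 : (1 + |B| + Q) * d ^ n ≤ u n * d ^ n := by gcongr; linarith
    nlinarith [le_abs_self B, abs_nonneg B]
  · have h1 : ∑ k ∈ Finset.range n, l k ≤ ∑ k ∈ Finset.range n, u n * d ^ k := by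
      refine Finset.sum_le_sum fun k hk => ?_
      rw [hlu k]
      have := hmin k (Finset.mem_range.1 hk)
      gcongr
    rw [← Finset.mul_sum, geom_sum_eq hd.ne'] at h1
    have hd1 : 0 < d - 1 := by linarith
    calc (d - 1) * ∑ k ∈ Finset.range n, l k
        ≤ (d - 1) * (u n * ((d ^ n - 1) / (d - 1))) := by gcongr
      _ = u n * d ^ n - u n := by field_simp
      _ ≤ l n := by rw [hlu n]; linarith [hu0 n]

lemma E1_mem {Φ : ℕ → ℝ} {x : ℝ} (hx : x ∈ E1 Φ) : x ∈ Set.Ioo (0 : ℝ) 1 ∧ Irrational x :=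
  ⟨⟨lt_of_le_of_ne hx.1.1 (Ne.symm hx.2.1.ne_zero), hx.1.2⟩, hx.2.1⟩

lemma frequently_cfA_succ {Φ : ℕ → ℝ} {x : ℝ} (hx : x ∈ E1 Φ) :
    ∃ᶠ n in atTop, Φ (n + 1) ≤ (cfA (n + 1) x : ℝ) := by
  refine frequently_atTop.2 fun N => ?_
  obtain ⟨n, hn, h⟩ := frequently_atTop.1 hx.2.2 (N + 1)
  obtain ⟨m, rfl⟩ := Nat.exists_eq_add_of_le' (show 1 ≤ n by omega)
  exact ⟨m, by omega, h⟩

lemma dimH_E1_le_of_exp_exp (Φ : ℕ → ℝ) {c d : ℝ} (hd : 1 < d) (hdc : d < c)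
    (hΦ : ∀ᶠ n in atTop, Real.exp (c ^ n) ≤ Φ n) (s : ℝ≥0) (hs : 1 < (s : ℝ) * (1 + d)) :
    dimH (E1 Φ) ≤ s := by
  have hs0 : (0 : ℝ) < s := by
    by_contra h
    have : (s : ℝ) = 0 := le_antisymm (not_lt.1 h) s.2
    rw [this] at hs; linarith
  have hd1 : 0 < d - 1 := by linarith
  obtain ⟨θ, hθ1, hθ2⟩ : ∃ θ, max 0 (1 - 2 * (s : ℝ)) < θ ∧ θ < s * (d - 1) :=
    exists_between (max_lt (by positivity) (by linarith))
  have hθ0 : 0 < θ := (le_max_left _ _).trans_lt hθ1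
  have hθs : 1 - 2 * (s : ℝ) < θ := (le_max_right _ _).trans_lt hθ1
  refine dimH_le_of_frequently_large (E1 Φ) s θ (θ / (d - 1)) (by linarith) (by positivity)
    ((div_lt_iff₀ hd1).2 hθ2) (fun x hx => E1_mem hx) fun K x hx => ?_
  obtain ⟨hx1, hx2⟩ := E1_mem hx
  have ha : ∀ k, (0 : ℝ) < cfA (k + 1) x := fun k => by
    exact_mod_cast one_le_cfA hx2 hx1 (k + 1)
  have ha1 : ∀ k, (1 : ℝ) ≤ cfA (k + 1) x := fun k => by
    exact_mod_cast one_le_cfA hx2 hx1 (k + 1)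
  have hfreq : ∃ᶠ n in atTop, c ^ n ≤ Real.log (cfA (n + 1) x) := by
    refine ((frequently_cfA_succ hx).and_eventually
      ((tendsto_add_atTop_nat 1).eventually hΦ)).mono ?_
    rintro n ⟨h1, h2⟩
    rw [Real.le_log_iff_exp_le (ha n)]
    refine le_trans (Real.exp_le_exp.2 ?_) (h2.trans h1)
    exact pow_le_pow_right₀ (by linarith) (by omega)
  refine (frequently_record _ (fun k => Real.log_nonneg (ha1 k)) hd hdc hfreq (K * Real.log 2)
    (by have := Real.log_nonneg (x := 2) (by norm_num); positivity)).mono ?_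
  rintro n ⟨h1, h2⟩
  constructor
  · rw [← Real.log_le_log_iff (by positivity) (ha n), Real.log_pow]
    push_cast
    linarith
  · have e : ∏ k ∈ Finset.range n, (cfA (k + 1) x : ℝ) ^ θ =
        Real.exp (θ * ∑ k ∈ Finset.range n, Real.log (cfA (k + 1) x)) := by
      rw [Finset.mul_sum, Real.exp_sum]
      exact Finset.prod_congr rfl fun k _ => by rw [Real.rpow_def_of_pos (ha k), mul_comm]
    rw [e, Real.rpow_def_of_pos (ha n)]
    apply Real.exp_le_exp.2
    rw [mul_div_assoc', le_div_iff₀ hd1]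
    nlinarith

lemma dimH_E1_le_of_half_lt (Φ : ℕ → ℝ)
    (hΦ : ∀ Q : ℝ, ∀ᶠ n : ℕ in atTop, Real.exp (Q * n) ≤ Φ n) (s : ℝ≥0) (hs : 1 < 2 * (s : ℝ)) :
    dimH (E1 Φ) ≤ s := by
  refine dimH_le_of_frequently_large (E1 Φ) s 0 0 (by linarith) le_rfl (by linarith)
    (fun x hx => E1_mem hx) fun K x hx => ?_
  refine ((frequently_cfA_succ hx).and_eventually
    ((tendsto_add_atTop_nat 1).eventually (hΦ (K * Real.log 2)))).mono ?_
  rintro n ⟨h1, h2⟩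
  refine ⟨?_, by simp⟩
  refine le_trans (le_of_eq ?_) (h2.trans h1)
  rw [← Real.exp_log (show (0 : ℝ) < 2 ^ (K * (n + 1)) by positivity), Real.log_pow]
  congr 1; push_cast; ring

theorem dimH_E1_of_B_eq_top (Φ : ℕ → ℝ) (hΦ : ∀ n, 0 < Φ n)
    (hB : liminf (fun n : ℕ => ((Real.log (Φ n) / n : ℝ) : EReal)) atTop = ⊤)
    (b : ℝ≥0∞)
    (hb : ENNReal.log b =
      liminf (fun n : ℕ => ((Real.log (Real.log (Φ n)) / n : ℝ) : EReal)) atTop) :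
    dimH (E1 Φ) = (1 + b)⁻¹ := by
  have hlin : ∀ Q : ℝ, ∀ᶠ n : ℕ in atTop, Q * n < Real.log (Φ n) := by
    intro Q
    have h := eventually_lt_of_lt_liminf (u := fun n : ℕ => ((Real.log (Φ n) / n : ℝ) : EReal))
      (f := atTop) (b := ((Q : ℝ) : EReal)) (by rw [hB]; exact EReal.coe_lt_top Q)
    filter_upwards [h, eventually_ge_atTop 1] with n h1 h2
    rw [EReal.coe_lt_coe_iff, lt_div_iff₀ (by exact_mod_cast h2)] at h1
    exact h1
  have hlogpos : ∀ᶠ n : ℕ in atTop, 1 ≤ Real.log (Φ n) := by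
    filter_upwards [hlin 1, eventually_ge_atTop 1] with n h1 h2
    have : (1 : ℝ) ≤ n := by exact_mod_cast h2
    linarith
  have hb1 : 1 ≤ b := by
    rw [← ENNReal.zero_le_log_iff, hb]
    refine le_liminf_of_le (by isBoundedDefault) ?_
    filter_upwards [hlogpos] with n h1
    have := Real.log_nonneg h1
    rw [← EReal.coe_zero, EReal.coe_le_coe_iff]
    positivity
  apply le_antisymm
  · refine le_of_forall_gt_imp_ge_of_dense fun s hs => ?_
    induction s with
    | top => exact le_top
    | coe s =>
    have hs0 : 0 < s := by
      have := zero_le.trans_lt hs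
      exact_mod_cast this
    rcases hb1.eq_or_lt with rfl | hb1'
    · apply dimH_E1_le_of_half_lt
      · intro Q
        filter_upwards [hlin Q] with n hn
        exact ((Real.lt_log_iff_exp_lt (hΦ n)).1 hn).le
      · have h2 : ((2⁻¹ : ℝ≥0) : ℝ≥0∞) < s := by
          rw [ENNReal.coe_inv two_ne_zero]
          convert hs using 2
          norm_num
        have h3 : ((2⁻¹ : ℝ≥0) : ℝ) < s := by exact_mod_cast h2
        norm_num at h3
        linarith
    · -- Pick `1 < d < c < b` with `1 / (1 + d) < s`.
      have hlt : ((max 1 (s⁻¹ - 1) : ℝ≥0) : ℝ≥0∞) < b := by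
        rw [ENNReal.coe_max, max_lt_iff]
        refine ⟨by simpa using hb1', ?_⟩
        rw [ENNReal.inv_lt_iff_inv_lt, ← ENNReal.coe_inv hs0.ne'] at hs
        rw [ENNReal.coe_sub, ENNReal.coe_one]
        rcases le_total (s⁻¹ : ℝ≥0) 1 with h1 | h1
        · rw [tsub_eq_zero_of_le (by exact_mod_cast h1)]
          exact zero_lt_one.trans hb1'
        · exact ENNReal.sub_lt_of_lt_add (by exact_mod_cast h1) (by rwa [add_comm])
      obtain ⟨c, hc1, hc2⟩ := ENNReal.lt_iff_exists_nnreal_btwn.1 hlt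
      obtain ⟨d, hd1, hd2⟩ := exists_between (ENNReal.coe_lt_coe.1 hc1)
      obtain ⟨hd1, hd3⟩ := max_lt_iff.1 hd1
      refine dimH_E1_le_of_exp_exp Φ (c := c) (d := d) (by exact_mod_cast hd1)
        (by exact_mod_cast hd2) ?_ s ?_
      · have hc0 : (0 : ℝ) < c := by exact_mod_cast (zero_lt_one.trans hd1).trans hd2
        have hlog : ((Real.log c : ℝ) : EReal) < ENNReal.log b := by
          rw [← ENNReal.log_ofReal_of_pos hc0, ENNReal.log_lt_log_iff, ENNReal.ofReal_coe_nnreal]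
          exact hc2
        rw [hb] at hlog
        have h := eventually_lt_of_lt_liminf hlog
        filter_upwards [h, eventually_ge_atTop 1, hlogpos] with n h1 h2 h3
        rw [EReal.coe_lt_coe_iff, lt_div_iff₀ (by exact_mod_cast h2), mul_comm, ← Real.log_pow,
          Real.log_lt_log_iff (by positivity) (by linarith), Real.lt_log_iff_exp_lt (hΦ n)] at h1
        exact h1.le
      · have h4 : s⁻¹ < 1 + d := by
          rw [add_comm]; exact lt_add_of_tsub_lt_right hd3
        have h5 : 1 < s * (1 + d) := by
          have := mul_lt_mul_of_pos_left h4 hs0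
          rwa [mul_inv_cancel₀ hs0.ne'] at this
        exact_mod_cast h5
  · refine le_of_forall_lt_imp_le_of_dense fun r hr => ?_
    induction b with
    | top => simp at hr
    | coe b =>
    lift r to ℝ≥0 using hr.ne_top
    rcases eq_or_ne r 0 with rfl | hr0
    · simp
    have hrpos : 0 < r := pos_iff_ne_zero.2 hr0
    have hb1' : (1 : ℝ) ≤ b := by exact_mod_cast hb1
    have hrb : (r : ℝ) * (1 + b) < 1 := by
      rw [ENNReal.lt_inv_iff_lt_inv, ← ENNReal.coe_inv hr0] at hr
      have h1 : 1 + b < r⁻¹ := by exact_mod_cast hr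
      have h2 := mul_lt_mul_of_pos_left h1 hrpos
      rw [mul_inv_cancel₀ hr0] at h2
      exact_mod_cast h2
    have hr' : (0 : ℝ) < r := by exact_mod_cast hrpos
    obtain ⟨d, hd1, hd2⟩ : ∃ d : ℝ, (b : ℝ) < d ∧ d < 1 / r - 1 := by
      apply exists_between
      rw [lt_sub_iff_add_lt, lt_div_iff₀ hr']
      linarith
    have hd0 : 0 < d := by linarith
    refine le_dimH_E1 Φ (d := d) (by linarith) ?_ r hrpos ?_
    · have hlog : ENNReal.log b < ((Real.log d : ℝ) : EReal) := by
        rw [← ENNReal.log_ofReal_of_pos hd0, ENNReal.log_lt_log_iff, ← ENNReal.ofReal_coe_nnreal]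
        exact (ENNReal.ofReal_lt_ofReal_iff hd0).2 hd1
      rw [hb] at hlog
      have h := frequently_lt_of_liminf_lt (by isBoundedDefault) hlog
      refine (h.and_eventually ((eventually_ge_atTop 1).and hlogpos)).mono ?_
      rintro n ⟨h1, h2, h3⟩
      rw [EReal.coe_lt_coe_iff, div_lt_iff₀ (by exact_mod_cast h2), mul_comm, ← Real.log_pow,
          Real.log_lt_log_iff (by linarith) (by positivity), Real.log_lt_iff_lt_exp (hΦ n)] at h1
      exact h1.le
    · rw [lt_sub_iff_add_lt, lt_div_iff₀ hr'] at hd2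
      linarith
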